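/- Let n ≥ 2, let V ⊆ ℝ^{n−1} × ℂ be open, and let ψ : V → ℝ be C² (as a function of n+1 real variables), with ψ_j denoting ∂ψ/∂x_j for j = 1,…,n−1. Let U = {(z,t) ∈ (ℂ∖{0})^{n−1} × ℂ : (|z₁|²,…,|z_{n−1}|², t) ∈ V} and Ψ(z,t) = ψ(|z₁|²,…,|z_{n−1}|², t). Define the real alternating 2-form ω on ℂⁿ = ℂ^{n−1} × ℂ at (z,t) ∈ U by ω_{(z,t)}(u,v) = (1/4)·( D²Ψ_{(z,t)}(iu, v) − D²Ψ_{(z,t)}(u, iv) ) (this is (i/2)∂∂̄Ψ), and assume ω_{(z,t)}(u, iu) > 0 for all u ≠ 0 (Ψ is strictly plurisubharmonic). Define F : U → ℝⁿ by F(z,t) = ( Im(i^{n+1}·t), ψ₁(|z₁|²,…,|z_{n−1}|²,t)·|z₁|², …, ψ_{n−1}(|z₁|²,…,|z_{n−1}|²,t)·|z_{n−1}|² ), whose last n−1 components form the moment map of the T^{n−1}-action rotating the z-coordinates, and define the ℂ-valued alternating n-form Ω_{(z,t)}(v₁,…,vₙ) = det(M)/(z₁⋯z_{n−1}), where M is the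 complex n×n matrix whose (a,b) entry is the a-th coordinate of v_b in the coordinates (z₁,…,z_{n−1},t) (i.e. Ω = (dz₁/z₁)∧⋯∧(dz_{n−1}/z_{n−1})∧dt). If (z,t) ∈ U is such that the real Fréchet derivative DF(z,t) : ℂⁿ → ℝⁿ is surjective, then ω_{(z,t)}(u, v) = 0 for all u, v ∈ ker DF(z,t), and Im Ω_{(z,t)}(v₁,…,vₙ) = 0 for all v₁,…,vₙ ∈ ker DF(z,t). (This is the coordinate-chart version of Proposition 3.3: f = (Im(i^{n+1}t₀), μ) is a special Lagrangian fibration on the smoothing of an isolated toric Gorenstein singularity.) -/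

import Mathlib

/-!
Write `e_j` for the vector field `(0,…,i z_j,…,0; 0)` generating the rotation of the `j`-th
coordinate, and `μ_j = ψ_j·|z_j|²`. The `e_j` are linear vector fields commuting with `i`, and
`DΨ(e_j) = 0`, `DΨ(i e_j) = -2 μ_j`; differentiating these identities gives the moment map
identity `ω(e_j, ·) = -½ dμ_j` (`kformPair_rot`). Since `F` is torus-invariant, every `e_j` lies
in `ker DF` (`fderiv_smoothingFib_rot`).

By surjectivity, `ker DF` has real dimension `n`, so it has a basis `e_1, …, e_{n-1}, w`
(`exists_basis`). The moment map identity kills `ω(e_j, ·)` on the kernel, and `ω(w, w) = 0` by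
antisymmetry, so `ω` vanishes there. As `Im Ω` is a top-degree form on the kernel, it is enough to
evaluate it on this basis, where the defining matrix is triangular (`detAlt_rot`) and
`Ω(e_1, …, e_{n-1}, w) = i^{n-1} w_t = -i^{n+1} w_t`; this is real because the first component of
`DF(w)` vanishes.
-/


open Complex

noncomputable section

/-- `x(z) = (|z₁|², …, |z_m|²)`. -/
def sqNorms {m : ℕ} (z : Fin m → ℂ) : Fin m → ℝ := fun a => Complex.normSq (z a)

/-- `ψ_j = ∂ψ/∂x_j`, the partial derivative in the `j`-th coordinate of the `ℝ^m` factor. -/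
def pderivFst {m : ℕ} (ψ : (Fin m → ℝ) × ℂ → ℝ) (j : Fin m) (p : (Fin m → ℝ) × ℂ) : ℝ :=
  fderiv ℝ ψ p (Pi.single j 1, 0)

/-- The potential `Ψ(z,t) = ψ(|z₁|²,…,|z_m|², t)`. -/
def potPair {m : ℕ} (ψ : (Fin m → ℝ) × ℂ → ℝ) (p : (Fin m → ℂ) × ℂ) : ℝ :=
  ψ (sqNorms p.1, p.2)

/-- The form `ω = (i/2)∂∂̄Ψ`:
`ω_{(z,t)}(u,v) = (1/4)( D²Ψ_{(z,t)}(iu, v) − D²Ψ_{(z,t)}(u, iv) )`. -/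
def kformPair {m : ℕ} (ψ : (Fin m → ℝ) × ℂ → ℝ) (p u v : (Fin m → ℂ) × ℂ) : ℝ :=
  (1 / 4 : ℝ) * (fderiv ℝ (fderiv ℝ (potPair ψ)) p (Complex.I • u) v
    - fderiv ℝ (fderiv ℝ (potPair ψ)) p u (Complex.I • v))

/-- The fibration `F(z,t) = ( Im(i^{n+1}·t), ψ₁·|z₁|², …, ψ_{n−1}·|z_{n−1}|² )` of
Proposition 3.3, with last `n−1` components the moment map of the `T^{n−1}`-action. -/
def smoothingFib (n : ℕ) (ψ : (Fin (n - 1) → ℝ) × ℂ → ℝ)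
    (p : (Fin (n - 1) → ℂ) × ℂ) : Fin n → ℝ :=
  fun b =>
    if h : (b : ℕ) = 0 then (Complex.I ^ (n + 1) * p.2).im
    else
      pderivFst ψ ⟨(b : ℕ) - 1, by have := b.isLt; omega⟩ (sqNorms p.1, p.2) *
        Complex.normSq (p.1 ⟨(b : ℕ) - 1, by have := b.isLt; omega⟩)

/-- The holomorphic `n`-form `Ω = (dz₁/z₁)∧⋯∧(dz_{n−1}/z_{n−1})∧dt` evaluated on `n`
tangent vectors: `Ω(v₁,…,vₙ) = det(M)/(z₁⋯z_{n−1})` where `M_{ab}` is the `a`-th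
coordinate of `v_b` in the coordinates `(z₁,…,z_{n−1},t)`. -/
def smoothingForm (n : ℕ) (z : Fin (n - 1) → ℂ)
    (v : Fin n → (Fin (n - 1) → ℂ) × ℂ) : ℂ :=
  (Matrix.of fun a b : Fin n =>
      if h : (a : ℕ) < n - 1 then (v b).1 ⟨(a : ℕ), h⟩ else (v b).2).det
    / ∏ j, z j

/-! ### Rotation fields -/

/-- The generator `(z,t) ↦ (0,…,i z_j,…,0; 0)` of the rotation of the `j`-th coordinate, as a
real-linear map (a linear vector field). -/
def rotField {m : ℕ} (j : Fin m) : ((Fin m → ℂ) × ℂ) →L[ℝ] ((Fin m → ℂ) × ℂ) :=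
  LinearMap.toContinuousLinearMap
    { toFun := fun q => (Pi.single j (Complex.I * q.1 j), 0)
      map_add' := fun x y => by
        refine Prod.ext ?_ (by simp)
        simp [mul_add, Pi.single_add]
      map_smul' := fun c x => by
        refine Prod.ext ?_ (by simp)
        ext k
        by_cases h : k = j
        · subst h; simp; ring
        · simp [h] }

lemma rotField_apply {m : ℕ} (j : Fin m) (q : (Fin m → ℂ) × ℂ) :
    rotField j q = (Pi.single j (Complex.I * q.1 j), 0) := rfl

lemma rotField_I_smul {m : ℕ} (j : Fin m) (q : (Fin m → ℂ) × ℂ) :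
    rotField j (Complex.I • q) = Complex.I • rotField j q := by
  simp only [rotField_apply]
  refine Prod.ext ?_ (by simp)
  ext k
  by_cases h : k = j
  · subst h; simp
  · simp [h]

lemma hasFDerivAt_normSq (z : ℂ) :
    HasFDerivAt Complex.normSq ((2 * z.re) • Complex.reCLM + (2 * z.im) • Complex.imCLM) z := by
  have h1 : HasFDerivAt (fun z : ℂ => z.re) Complex.reCLM z := Complex.reCLM.hasFDerivAt
  have h2 : HasFDerivAt (fun z : ℂ => z.im) Complex.imCLM z := Complex.imCLM.hasFDerivAt
  have h := (h1.mul h1).add (h2.mul h2)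
  refine (h.congr_fderiv ?_).congr_of_eventuallyEq (Filter.Eventually.of_forall fun w => ?_)
  · ext w; simp; ring
  · simp [Complex.normSq_apply]

/-- The derivative of `(z,t) ↦ (|z₁|²,…,|z_m|²,t)`. -/
def sqDeriv {m : ℕ} (q : (Fin m → ℂ) × ℂ) : ((Fin m → ℂ) × ℂ) →L[ℝ] ((Fin m → ℝ) × ℂ) :=
  (ContinuousLinearMap.pi fun a =>
    (((2 * (q.1 a).re) • Complex.reCLM + (2 * (q.1 a).im) • Complex.imCLM).comp
      (ContinuousLinearMap.proj a)).comp (ContinuousLinearMap.fst ℝ (Fin m → ℂ) ℂ)).prod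
    (ContinuousLinearMap.snd ℝ (Fin m → ℂ) ℂ)

lemma hasFDerivAt_sq {m : ℕ} (q : (Fin m → ℂ) × ℂ) :
    HasFDerivAt (fun q : (Fin m → ℂ) × ℂ => (sqNorms q.1, q.2)) (sqDeriv q) q := by
  refine HasFDerivAt.prodMk (hasFDerivAt_pi.2 fun a => ?_) hasFDerivAt_snd
  exact (hasFDerivAt_normSq (q.1 a)).comp q
    (((ContinuousLinearMap.proj (R := ℝ) (φ := fun _ : Fin m => ℂ) a).comp
      (ContinuousLinearMap.fst ℝ (Fin m → ℂ) ℂ)).hasFDerivAt (x := q))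

lemma sqDeriv_rot {m : ℕ} (j : Fin m) (q : (Fin m → ℂ) × ℂ) :
    sqDeriv q (rotField j q) = 0 := by
  refine Prod.ext ?_ (by simp [sqDeriv, rotField_apply])
  ext k
  by_cases h : k = j
  · subst h; simp [sqDeriv, rotField_apply]; ring
  · simp [sqDeriv, rotField_apply, h]

lemma sqDeriv_I_rot {m : ℕ} (j : Fin m) (q : (Fin m → ℂ) × ℂ) :
    sqDeriv q (Complex.I • rotField j q)
      = (-2 * Complex.normSq (q.1 j)) • ((Pi.single j 1, 0) : (Fin m → ℝ) × ℂ) := by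
  refine Prod.ext ?_ (by simp [sqDeriv, rotField_apply])
  ext k
  by_cases h : k = j
  · subst h; simp [sqDeriv, rotField_apply, Complex.normSq_apply]; ring
  · simp [sqDeriv, rotField_apply, h]

/-! ### First and second derivatives of the potential -/

section calculus

variable {m : ℕ} {ψ : (Fin m → ℝ) × ℂ → ℝ} {q : (Fin m → ℂ) × ℂ}

lemma fderiv_potPair (h : DifferentiableAt ℝ ψ (sqNorms q.1, q.2)) :
    fderiv ℝ (potPair ψ) q = (fderiv ℝ ψ (sqNorms q.1, q.2)).comp (sqDeriv q) :=
  (HasFDerivAt.comp (g := ψ) q h.hasFDerivAt (hasFDerivAt_sq q)).fderiv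

lemma fderiv_potPair_rot (j : Fin m) (h : DifferentiableAt ℝ ψ (sqNorms q.1, q.2)) :
    fderiv ℝ (potPair ψ) q (rotField j q) = 0 := by
  rw [fderiv_potPair h, ContinuousLinearMap.comp_apply, sqDeriv_rot, map_zero]

lemma fderiv_potPair_I_rot (j : Fin m) (h : DifferentiableAt ℝ ψ (sqNorms q.1, q.2)) :
    fderiv ℝ (potPair ψ) q (Complex.I • rotField j q)
      = -2 * (pderivFst ψ j (sqNorms q.1, q.2) * Complex.normSq (q.1 j)) := by
  rw [fderiv_potPair h, ContinuousLinearMap.comp_apply, sqDeriv_I_rot, map_smul]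
  simp only [pderivFst, smul_eq_mul]
  ring

lemma contDiff_sq : ContDiff ℝ 2 (fun q : (Fin m → ℂ) × ℂ => (sqNorms q.1, q.2)) := by
  refine ContDiff.prodMk (contDiff_pi.2 fun a => ?_) contDiff_snd
  have h1 : ContDiff ℝ 2 (fun q : (Fin m → ℂ) × ℂ => (q.1 a).re) :=
    Complex.reCLM.contDiff.comp ((contDiff_apply ℝ ℂ a).comp contDiff_fst)
  have h2 : ContDiff ℝ 2 (fun q : (Fin m → ℂ) × ℂ => (q.1 a).im) :=
    Complex.imCLM.contDiff.comp ((contDiff_apply ℝ ℂ a).comp contDiff_fst)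
  simp only [sqNorms, Complex.normSq_apply]
  exact (h1.mul h1).add (h2.mul h2)

lemma contDiffAt_potPair (h : ContDiffAt ℝ 2 ψ (sqNorms q.1, q.2)) :
    ContDiffAt ℝ 2 (potPair ψ) q :=
  ContDiffAt.comp (g := ψ) q h contDiff_sq.contDiffAt

lemma eventually_differentiableAt (h : ContDiffAt ℝ 2 ψ (sqNorms q.1, q.2)) :
    ∀ᶠ r in nhds q, DifferentiableAt ℝ ψ (sqNorms r.1, r.2) := by
  have h1 : ∀ᶠ y in nhds (sqNorms q.1, q.2), DifferentiableAt ℝ ψ y :=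
    (h.eventually (by simp)).mono fun y hy => hy.differentiableAt (by simp)
  exact (contDiff_sq (m := m)).continuous.continuousAt.eventually h1

lemma hasFDerivAt_fderiv_potPair (h : ContDiffAt ℝ 2 ψ (sqNorms q.1, q.2)) :
    HasFDerivAt (fderiv ℝ (potPair ψ)) (fderiv ℝ (fderiv ℝ (potPair ψ)) q) q :=
  (((contDiffAt_potPair h).fderiv_right (m := 1) (by norm_num)).differentiableAt
    (by simp)).hasFDerivAt

lemma snd_fderiv_symm (h : ContDiffAt ℝ 2 ψ (sqNorms q.1, q.2)) (u v : (Fin m → ℂ) × ℂ) :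
    fderiv ℝ (fderiv ℝ (potPair ψ)) q u v = fderiv ℝ (fderiv ℝ (potPair ψ)) q v u :=
  ((contDiffAt_potPair h).isSymmSndFDerivAt (by simp)).eq u v

lemma kformPair_self (h : ContDiffAt ℝ 2 ψ (sqNorms q.1, q.2)) (u : (Fin m → ℂ) × ℂ) :
    kformPair ψ q u u = 0 := by
  rw [kformPair, snd_fderiv_symm h u]; ring

lemma kformPair_swap (h : ContDiffAt ℝ 2 ψ (sqNorms q.1, q.2)) (u v : (Fin m → ℂ) × ℂ) :
    kformPair ψ q u v = - kformPair ψ q v u := by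
  rw [kformPair, kformPair, snd_fderiv_symm h u, snd_fderiv_symm h (Complex.I • u)]; ring

/-- The moment map identity `ω(e_j, ·) = -½ dμ_j`, where `e_j` generates the rotation of the
`j`-th coordinate and `L` is the derivative of `μ_j = ψ_j·|z_j|²`. It comes from differentiating
`DΨ(i e_j) = -2 μ_j` along `w` and `DΨ(e_j) = 0` along `iw`. -/
lemma kformPair_rot (h : ContDiffAt ℝ 2 ψ (sqNorms q.1, q.2)) (j : Fin m)
    (L : ((Fin m → ℂ) × ℂ) →L[ℝ] ℝ)
    (hL : HasFDerivAt (fun r : (Fin m → ℂ) × ℂ =>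
      pderivFst ψ j (sqNorms r.1, r.2) * Complex.normSq (r.1 j)) L q)
    (w : (Fin m → ℂ) × ℂ) :
    kformPair ψ q (rotField j q) w = -(1 / 2) * L w := by
  have hD := hasFDerivAt_fderiv_potPair h
  have hA : HasFDerivAt (fun r => rotField j r) (rotField j) q :=
    (rotField j).hasFDerivAt
  have hev := eventually_differentiableAt h
  have e1 := (hD.clm_apply hA).unique
    ((hasFDerivAt_const (0 : ℝ) q).congr_of_eventuallyEq
      (hev.mono fun r hr => fderiv_potPair_rot j hr))
  have hIA : HasFDerivAt (fun r => Complex.I • rotField j r) (Complex.I • rotField j) q :=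
    hA.const_smul Complex.I
  have e2 := (hD.clm_apply hIA).unique
    ((hL.const_mul (-2)).congr_of_eventuallyEq
      (hev.mono fun r hr => fderiv_potPair_I_rot j hr))
  have e1' := congrArg (fun T => T (Complex.I • w)) e1
  have e2' := congrArg (fun T => T w) e2
  simp [rotField_I_smul] at e1' e2'
  rw [kformPair, snd_fderiv_symm h (Complex.I • rotField j q), snd_fderiv_symm h (rotField j q)]
  linarith

end calculus

/-! ### Bases of the kernel and the determinant form -/

section linear

variable {m : ℕ} {q : (Fin m → ℂ) × ℂ}

lemma rotField_linearIndependent (hq : ∀ j, q.1 j ≠ 0) :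
    LinearIndependent ℝ (fun j : Fin m => rotField j q) := by
  rw [Fintype.linearIndependent_iff]
  intro g hg i
  have h := congrFun (congrArg Prod.fst hg) i
  simp only [rotField_apply, Prod.fst_sum, Prod.smul_fst, Finset.sum_apply, Pi.smul_apply] at h
  rw [Finset.sum_eq_single i (fun k _ hk => by simp [Pi.single_eq_of_ne' hk])
    (by simp)] at h
  simpa [hq i] using h

/-- A `K` of real dimension `m+1` containing all rotation generators has a basis consisting
of these generators followed by one further vector. -/
lemma exists_basis (hq : ∀ j, q.1 j ≠ 0) (K : Submodule ℝ ((Fin m → ℂ) × ℂ))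
    (hK : Module.finrank ℝ K = m + 1) (hmem : ∀ j, rotField j q ∈ K) :
    ∃ b : Module.Basis (Fin (m + 1)) ℝ K,
      ∀ j : Fin m, (b j.castSucc : (Fin m → ℂ) × ℂ) = rotField j q := by
  have hli : LinearIndependent ℝ (fun j : Fin m => (⟨rotField j q, hmem j⟩ : K)) :=
    LinearIndependent.of_comp K.subtype (rotField_linearIndependent hq)
  obtain ⟨w, hw⟩ := exists_linearIndependent_snoc_of_lt_finrank hli (by omega)
  refine ⟨basisOfLinearIndependentOfCardEqFinrank hw (by simp [hK]), fun j => ?_⟩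
  simp

/-- `(v₁,…,vₙ) ↦ det (a-th coordinate of v_b)`, as a real alternating map. -/
def detAlt (m : ℕ) : ((Fin m → ℂ) × ℂ) [⋀^Fin (m + 1)]→ₗ[ℝ] ℂ :=
  let L : ((Fin m → ℂ) × ℂ) →ₗ[ℝ] (Fin (m + 1) → ℂ) :=
    { toFun := fun u => Fin.snoc (α := fun _ => ℂ) u.1 u.2
      map_add' := fun x y => by
        ext a; refine Fin.lastCases ?_ (fun k => ?_) a <;> simp
      map_smul' := fun c x => by
        ext a; refine Fin.lastCases ?_ (fun k => ?_) a <;> simp }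
  { ((Matrix.detRowAlternating (R := ℂ)
      (n := Fin (m + 1))).toMultilinearMap.restrictScalars ℝ).compLinearMap (fun _ => L) with
    map_eq_zero_of_eq' := fun v i j h hij =>
      Matrix.det_zero_of_row_eq hij (congrArg L h) }

lemma detAlt_apply (v : Fin (m + 1) → (Fin m → ℂ) × ℂ) :
    detAlt m v = (Matrix.of fun b => (Fin.snoc (α := fun _ => ℂ) (v b).1 (v b).2 :
      Fin (m + 1) → ℂ)).det := rfl

lemma smoothingForm_eq (z : Fin m → ℂ) (v : Fin (m + 1) → (Fin m → ℂ) × ℂ) :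
    smoothingForm (m + 1) z v = detAlt m v / ∏ j, z j := by
  rw [detAlt_apply, ← Matrix.det_transpose]
  unfold smoothingForm
  congr 2

lemma detAlt_rot (v : Fin (m + 1) → (Fin m → ℂ) × ℂ)
    (hv : ∀ j : Fin m, v j.castSucc = rotField j q) :
    detAlt m v = (∏ j, Complex.I * q.1 j) * (v (Fin.last m)).2 := by
  rw [detAlt_apply, Matrix.det_of_isLowerTriangular]
  · rw [Fin.prod_univ_castSucc]
    simp [hv, rotField_apply]
  · intro a b hab
    have hab : a < b := hab
    obtain ⟨a, rfl⟩ := Fin.exists_castSucc_eq.2 (Fin.ne_last_of_lt hab)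
    rw [Matrix.of_apply, hv]
    refine Fin.lastCases ?_ (fun k => ?_) b hab
    · simp [rotField_apply]
    · intro hk
      have : k ≠ a := by rintro rfl; exact lt_irrefl _ hk
      simp [rotField_apply, this]

end linear

/-! ### Torus invariance of the fibration -/

/-- The curve rotating the `j`-th coordinate of `p` by the angle `s`. -/
def rotCurve {m : ℕ} (j : Fin m) (p : (Fin m → ℂ) × ℂ) (s : ℝ) : (Fin m → ℂ) × ℂ :=
  (fun k => if k = j then Complex.exp (s * Complex.I) * p.1 k else p.1 k, p.2)

lemma hasDerivAt_rotCurve {m : ℕ} (j : Fin m) (p : (Fin m → ℂ) × ℂ) :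
    HasDerivAt (rotCurve j p) (rotField j p) 0 := by
  refine HasDerivAt.prodMk (hasDerivAt_pi.2 fun k => ?_) (hasDerivAt_const _ _)
  by_cases h : k = j
  · subst h
    have h1 : HasDerivAt (fun s : ℝ => (s : ℂ) * Complex.I) Complex.I 0 := by
      simpa using (Complex.ofRealCLM.hasDerivAt (x := (0 : ℝ))).mul_const Complex.I
    simpa using h1.cexp.mul_const (p.1 k)
  · simpa [h] using hasDerivAt_const (0 : ℝ) (p.1 k)

lemma sqNorms_rotCurve {m : ℕ} (j : Fin m) (p : (Fin m → ℂ) × ℂ) (s : ℝ) :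
    sqNorms (rotCurve j p s).1 = sqNorms p.1 := by
  ext k
  by_cases h : k = j <;>
    simp [sqNorms, rotCurve, h, Complex.normSq_eq_norm_sq, Complex.norm_exp_ofReal_mul_I]

lemma smoothingFib_rotCurve {m : ℕ} (ψ : (Fin m → ℝ) × ℂ → ℝ) (j : Fin m)
    (p : (Fin m → ℂ) × ℂ) (s : ℝ) :
    smoothingFib (m + 1) ψ (rotCurve j p s) = smoothingFib (m + 1) ψ p := by
  have h := sqNorms_rotCurve j p s
  have h' : ∀ k, Complex.normSq ((rotCurve j p s).1 k) = Complex.normSq (p.1 k) :=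
    fun k => congrFun h k
  have h2 : (rotCurve j p s).2 = p.2 := rfl
  funext b
  simp only [smoothingFib]
  split_ifs
  · rw [h2]
  · rw [h2]
    erw [h, h']

/-- The fibration is torus-invariant, so its fibres are tangent to the rotation generators. -/
lemma fderiv_smoothingFib_rot {m : ℕ} (ψ : (Fin m → ℝ) × ℂ → ℝ) (p : (Fin m → ℂ) × ℂ)
    (hd : DifferentiableAt ℝ (smoothingFib (m + 1) ψ) p) (j : Fin m) :
    fderiv ℝ (smoothingFib (m + 1) ψ) p (rotField j p) = 0 := by
  have h0 : rotCurve j p 0 = p := by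
    refine Prod.ext ?_ rfl
    ext k
    simp [rotCurve]
  have h1 : HasFDerivAt (smoothingFib (m + 1) ψ) (fderiv ℝ (smoothingFib (m + 1) ψ) p)
      (rotCurve j p 0) := by rw [h0]; exact hd.hasFDerivAt
  have h2 := h1.comp_hasDerivAt 0 (hasDerivAt_rotCurve j p)
  refine h2.unique ((hasDerivAt_const (0 : ℝ) (smoothingFib (m + 1) ψ p)).congr_of_eventuallyEq
    (Filter.Eventually.of_forall fun s => ?_))
  exact smoothingFib_rotCurve ψ j p s

/-! ### The special Lagrangian condition -/

/-- The form `ω` at a point as a bilinear map. -/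
def kformBilin {m : ℕ} (ψ : (Fin m → ℝ) × ℂ → ℝ) (p : (Fin m → ℂ) × ℂ) :
    ((Fin m → ℂ) × ℂ) →ₗ[ℝ] ((Fin m → ℂ) × ℂ) →ₗ[ℝ] ℝ :=
  LinearMap.mk₂ ℝ (kformPair ψ p)
    (fun u u' v => by simp [kformPair]; ring)
    (fun c u v => by simp [kformPair, smul_comm Complex.I c]; ring)
    (fun u v v' => by simp [kformPair]; ring)
    (fun c u v => by simp [kformPair, smul_comm Complex.I c]; ring)

/-- The result for `n = m + 1` under the sole regularity assumption that `ψ` is `C²` at the point.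
The map `F` is a variable of type `(Fin m → ℂ) × ℂ → _`, so that `Fin (m + 1 - 1)` does not
occur in the types of its derivative. -/
lemma main_succ (m : ℕ) (ψ : (Fin m → ℝ) × ℂ → ℝ) (p : (Fin m → ℂ) × ℂ)
    (F : (Fin m → ℂ) × ℂ → Fin (m + 1) → ℝ)
    (hF : F = smoothingFib (m + 1) ψ) (hp1 : ∀ j, p.1 j ≠ 0) (hψ : ContDiffAt ℝ 2 ψ (sqNorms p.1, p.2))
    (hsurj : Function.Surjective ⇑(fderiv ℝ F p)) :
    (∀ u v : (Fin m → ℂ) × ℂ,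
        fderiv ℝ F p u = 0 → fderiv ℝ F p v = 0 →
        kformPair ψ p u v = 0)
    ∧ ∀ v : Fin (m + 1) → (Fin m → ℂ) × ℂ,
        (∀ b, fderiv ℝ F p (v b) = 0) →
        (smoothingForm (m + 1) p.1 v).im = 0 := by
  -- A non-differentiable map has `fderiv = 0`, which is not surjective.
  have hd : DifferentiableAt ℝ F p := by
    by_contra hnd
    rw [fderiv_zero_of_not_differentiableAt hnd] at hsurj
    obtain ⟨x, hx⟩ := hsurj (fun _ => 1)
    simpa using congrFun hx 0
  have hrotker : ∀ j : Fin m, fderiv ℝ F p (rotField j p) = 0 := by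
    subst hF
    exact fun j => fderiv_smoothingFib_rot ψ p hd j
  have hcomp := hasFDerivAt_pi'.1 hd.hasFDerivAt
  set D := fderiv ℝ F p with hD
  -- The component of index `0` of `DF`.
  have hzero : ∀ w, D w = 0 → (Complex.I ^ (m + 1 + 1) * w.2).im = 0 := by
    intro w hw
    have h1 := hcomp 0
    rw [hF] at h1
    have h2 : HasFDerivAt (fun r : (Fin m → ℂ) × ℂ => (Complex.I ^ (m + 1 + 1) * r.2).im)
        (Complex.imCLM.comp (Complex.I ^ (m + 1 + 1) • ContinuousLinearMap.snd ℝ (Fin m → ℂ) ℂ))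
        p :=
      Complex.imCLM.hasFDerivAt.comp p (hasFDerivAt_snd.const_mul _)
    have h3 := congrArg (fun T => T w) (h1.unique h2)
    simpa [hw] using h3.symm
  have hrot : ∀ (j : Fin m) (w), D w = 0 → kformPair ψ p (rotField j p) w = 0 := by
    intro j w hw
    have h1 := hcomp j.succ
    rw [hF] at h1
    -- The component of `F` of index `j + 1` is the moment map component `μ_j`.
    rw [kformPair_rot hψ j _ h1 w]
    simp [hw]
  have hfin : Module.finrank ℝ (LinearMap.ker D.toLinearMap) = m + 1 := by
    have h1 := LinearMap.finrank_range_add_finrank_ker D.toLinearMap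
    rw [LinearMap.range_eq_top.2 hsurj, finrank_top] at h1
    have h2 : Module.finrank ℝ ((Fin m → ℂ) × ℂ) = 2 * m + 2 := by
      rw [Module.finrank_prod, Module.finrank_pi_fintype]
      simp [Complex.finrank_real_complex]; ring
    have h3 : Module.finrank ℝ (Fin (m + 1) → ℝ) = m + 1 := by simp
    omega
  obtain ⟨b, hb⟩ := exists_basis hp1 (LinearMap.ker D.toLinearMap) hfin
    hrotker
  have hker : ∀ u : LinearMap.ker D.toLinearMap, D (u : (Fin m → ℂ) × ℂ) = 0 := fun u => u.2
  constructor
  · have key : (kformBilin ψ p).domRestrict₁₂ (LinearMap.ker D.toLinearMap)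
        (LinearMap.ker D.toLinearMap) = 0 := by
      refine b.ext fun i => b.ext fun k => ?_
      change kformPair ψ p (b i) (b k) = 0
      refine Fin.lastCases ?_ (fun i => ?_) i
      · refine Fin.lastCases (kformPair_self hψ _) (fun k => ?_) k
        rw [kformPair_swap hψ, hb, hrot k _ (hker _), neg_zero]
      · rw [hb, hrot i _ (hker _)]
    intro u v hu hv
    exact congrArg (fun T => T ⟨u, hu⟩ ⟨v, hv⟩) key
  · intro v hv
    -- `Im Ω` restricted to the kernel, a top-degree real alternating form there.
    let g : LinearMap.ker D.toLinearMap [⋀^Fin (m + 1)]→ₗ[ℝ] ℝ :=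
      (Complex.imLm ∘ₗ LinearMap.mulRight ℝ (∏ j, p.1 j)⁻¹).compAlternatingMap
        ((detAlt m).compLinearMap (LinearMap.ker D.toLinearMap).subtype)
    have hg : ∀ u : Fin (m + 1) → LinearMap.ker D.toLinearMap,
        g u = (smoothingForm (m + 1) p.1 fun i => (u i : (Fin m → ℂ) × ℂ)).im := by
      intro u
      rw [smoothingForm_eq]
      rfl
    have hgb : g b = 0 := by
      rw [hg, smoothingForm_eq, detAlt_rot _ hb, Finset.prod_mul_distrib, Finset.prod_const,
        Finset.card_univ, Fintype.card_fin]
      have hprod : ∏ j, p.1 j ≠ 0 := Finset.prod_ne_zero_iff.2 fun j _ => hp1 j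
      have h1 : Complex.I ^ m * (∏ j, p.1 j) * ((b (Fin.last m) : (Fin m → ℂ) × ℂ)).2
          / ∏ j, p.1 j = -(Complex.I ^ (m + 1 + 1) * (b (Fin.last m) : (Fin m → ℂ) × ℂ).2) := by
        rw [pow_succ, pow_succ, mul_assoc (Complex.I ^ m) Complex.I, Complex.I_mul_I]
        field_simp
      rw [h1, Complex.neg_im, hzero _ (hker _), neg_zero]
    have h2 := hg fun i => ⟨v i, hv i⟩
    rw [g.eq_smul_basis_det b, hgb] at h2
    simpa using h2.symm

/-- The coordinate-chart version of Proposition 3.3: on the smoothing of an isolated toric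
Gorenstein singularity, the fibres of `F = (Im(i^{n+1}t₀), μ)` are special Lagrangian
with respect to `ω = (i/2)∂∂̄Ψ` and `Ω` at points where `DF` is surjective. -/
theorem smoothing_fibration_special_lagrangian (n : ℕ) (hn : 2 ≤ n)
    (V : Set ((Fin (n - 1) → ℝ) × ℂ)) (hV : IsOpen V)
    (ψ : (Fin (n - 1) → ℝ) × ℂ → ℝ) (hψ : ContDiffOn ℝ 2 ψ V)
    (hpsh : ∀ p : (Fin (n - 1) → ℂ) × ℂ, (∀ j, p.1 j ≠ 0) → (sqNorms p.1, p.2) ∈ V →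
        ∀ u : (Fin (n - 1) → ℂ) × ℂ, u ≠ 0 → 0 < kformPair ψ p u (Complex.I • u))
    (p : (Fin (n - 1) → ℂ) × ℂ) (hp1 : ∀ j, p.1 j ≠ 0) (hp2 : (sqNorms p.1, p.2) ∈ V)
    (hsurj : Function.Surjective ⇑(fderiv ℝ (smoothingFib n ψ) p)) :
    (∀ u v : (Fin (n - 1) → ℂ) × ℂ,
        fderiv ℝ (smoothingFib n ψ) p u = 0 → fderiv ℝ (smoothingFib n ψ) p v = 0 →
        kformPair ψ p u v = 0)
    ∧ ∀ v : Fin n → (Fin (n - 1) → ℂ) × ℂ,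
        (∀ b, fderiv ℝ (smoothingFib n ψ) p (v b) = 0) →
        (smoothingForm n p.1 v).im = 0 := by
  have hc := hψ.contDiffAt (hV.mem_nhds hp2)
  obtain ⟨m, rfl⟩ : ∃ m, n = m + 1 := ⟨n - 1, by omega⟩
  exact main_succ m ψ p _ rfl hp1 hc hsurj
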